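/- arXiv:math/0111223 — 2 statements merged into one kernel-verified Lean document; each statement's English description precedes it below -/
import Mathlib

section
/- Let K be a locally finite simplicial complex of dimension k (a locally finite collection of simplices in some Euclidean space ℝ^N, closed under taking faces, with compatible intersections), and let |K| be its underlying polyhedron. Call a point p ∈ |K| a manifold point if it has a neighborhood in |K| homeomorphic to ℝ^k or to the closed half-space ℝ^{k-1} × [0,∞), and a non-manifold point otherwise. Then the set of non-manifold points of |K| is a union of closed simplices of K; equivalently, for every simplex σ of K, if the open simplex int(σ) contains a non-manifold point, then every point of the closed simplex σ is a non-manifold point, and in particular the set of non-manifold points is closed in |K| and is triangulated by a subcomplex of K. -/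
open Set Geometry

/-- `p` is a manifold point of a `k`-dimensional polyhedron `S ⊆ ℝ^N` if it has a
neighborhood in `S` homeomorphic to `ℝ^k` or to the closed half-space
`ℝ^(k-1) × [0,∞)`. -/
def IsManifoldPoint (k : ℕ) {N : ℕ} (S : Set (EuclideanSpace ℝ (Fin N)))
    (p : EuclideanSpace ℝ (Fin N)) : Prop :=
  ∃ V : Set (EuclideanSpace ℝ (Fin N)), IsOpen V ∧ p ∈ V ∧
    (Nonempty (((V ∩ S : Set (EuclideanSpace ℝ (Fin N)))) ≃ₜ EuclideanSpace ℝ (Fin k)) ∨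
     Nonempty (((V ∩ S : Set (EuclideanSpace ℝ (Fin N)))) ≃ₜ
        (EuclideanSpace ℝ (Fin (k - 1)) × (Set.Ici (0 : ℝ)))))

/-!
Let `p` and `q` lie in the open simplex of a face `s`. Starring `K` at `p` or at `q` gives
isomorphic subdivisions, so there is a self-homeomorphism of `|K|` sending `p` to `q`: if `λ x` is
the barycentric coordinate of the new vertex `p` at `x`, it is `x ↦ x + λ x • (q - p)`.
Hence a closed set of points that is invariant under all self-homeomorphisms of `|K|`, such as the
set of non-manifold points, contains an open simplex as soon as it meets it, and then also contains
the closed simplex.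
-/

section Barycentric

variable {𝕜 E : Type*} [Field 𝕜] [LinearOrder 𝕜] [AddCommGroup E] [Module 𝕜 E]
  {s t : Finset E} {w w₁ w₂ : E → 𝕜} {x y p q : E}

/-- `w` is a system of barycentric coordinates of `x` with respect to the vertex set `s`. The
weights are functions on the whole space, vanishing off `s`, so that the coordinates of a point with
respect to a simplex and to its faces can be compared. -/
structure IsBarycentric (s : Finset E) (w : E → 𝕜) (x : E) : Prop where
  nonneg : ∀ v, 0 ≤ w v
  eq_zero_of_notMem : ∀ v ∉ s, w v = 0
  sum_eq_one : ∑ v ∈ s, w v = 1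
  sum_smul_eq : ∑ v ∈ s, w v • v = x

namespace IsBarycentric

theorem mono (h : IsBarycentric s w x) (hst : s ⊆ t) : IsBarycentric t w x where
  nonneg := h.nonneg
  eq_zero_of_notMem v hv := h.eq_zero_of_notMem v (mt (@hst v) hv)
  sum_eq_one := by
    rw [← h.sum_eq_one, Finset.sum_subset hst fun v _ hv ↦ h.eq_zero_of_notMem v hv]
  sum_smul_eq := by
    rw [← h.sum_smul_eq, Finset.sum_subset hst fun v _ hv ↦ by
      rw [h.eq_zero_of_notMem v hv, zero_smul]]

theorem eq_of_affineIndependent (hs : AffineIndependent 𝕜 ((↑) : s → E))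
    (h₁ : IsBarycentric s w₁ x) (h₂ : IsBarycentric s w₂ x) : w₁ = w₂ := by
  funext v
  by_cases hv : v ∈ s
  · exact hs.eq_of_sum_eq_sum_subtype (h₁.sum_eq_one.trans h₂.sum_eq_one.symm)
      (h₁.sum_smul_eq.trans h₂.sum_smul_eq.symm) v hv
  · rw [h₁.eq_zero_of_notMem v hv, h₂.eq_zero_of_notMem v hv]

theorem add_smul_sub {a c : E → 𝕜} (hx : IsBarycentric s w x) (hp : IsBarycentric s a p)
    (hq : IsBarycentric s c q) {r : 𝕜} (hnonneg : ∀ v, 0 ≤ w v + r * (c v - a v)) :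
    IsBarycentric s (fun v ↦ w v + r * (c v - a v)) (x + r • (q - p)) where
  nonneg := hnonneg
  eq_zero_of_notMem v hv := by
    simp [hx.eq_zero_of_notMem v hv, hp.eq_zero_of_notMem v hv, hq.eq_zero_of_notMem v hv]
  sum_eq_one := by
    rw [Finset.sum_add_distrib, ← Finset.mul_sum, Finset.sum_sub_distrib, hx.sum_eq_one,
      hp.sum_eq_one, hq.sum_eq_one, sub_self, mul_zero, add_zero]
  sum_smul_eq := by
    simp only [add_smul, mul_smul, sub_smul]
    rw [Finset.sum_add_distrib, ← Finset.smul_sum, Finset.sum_sub_distrib, hx.sum_smul_eq,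
      hp.sum_smul_eq, hq.sum_smul_eq]

variable [IsStrictOrderedRing 𝕜]

theorem mem_convexHull (h : IsBarycentric s w x) : x ∈ convexHull 𝕜 (s : Set E) :=
  Finset.mem_convexHull'.2 ⟨w, fun v _ ↦ h.nonneg v, h.sum_eq_one, h.sum_smul_eq⟩

theorem convex_combination {a b : 𝕜} (h₁ : IsBarycentric s w₁ x) (h₂ : IsBarycentric s w₂ y)
    (ha : 0 ≤ a) (hb : 0 ≤ b) (hab : a + b = 1) :
    IsBarycentric s (a • w₁ + b • w₂) (a • x + b • y) where
  nonneg v := add_nonneg (mul_nonneg ha (h₁.nonneg v)) (mul_nonneg hb (h₂.nonneg v))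
  eq_zero_of_notMem v hv := by simp [h₁.eq_zero_of_notMem v hv, h₂.eq_zero_of_notMem v hv]
  sum_eq_one := by
    simp [Finset.sum_add_distrib, ← Finset.mul_sum, h₁.sum_eq_one, h₂.sum_eq_one, hab]
  sum_smul_eq := by
    simp [add_smul, mul_smul, Finset.sum_add_distrib, ← Finset.smul_sum, h₁.sum_smul_eq,
      h₂.sum_smul_eq]

end IsBarycentric

variable [IsStrictOrderedRing 𝕜]

theorem exists_isBarycentric_of_mem_convexHull (hx : x ∈ convexHull 𝕜 (s : Set E)) :
    ∃ w : E → 𝕜, IsBarycentric s w x := by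
  classical
  obtain ⟨w, hw_nonneg, hw_sum, rfl⟩ := Finset.mem_convexHull'.1 hx
  refine ⟨fun v ↦ if v ∈ s then w v else 0, fun v ↦ ?_, fun v hv ↦ if_neg hv, ?_, ?_⟩
  · split_ifs with hv
    exacts [hw_nonneg v hv, le_rfl]
  · rw [← hw_sum, Finset.sum_congr rfl fun v hv ↦ if_pos hv]
  · exact Finset.sum_congr rfl fun v hv ↦ by rw [if_pos hv]

variable (𝕜) in
/-- The open simplex with vertex set `s`: the points all of whose barycentric coordinates at the
vertices in `s` are positive. -/
def openSimplex (s : Finset E) : Set E :=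
  {x | ∃ w : E → 𝕜, IsBarycentric s w x ∧ ∀ v ∈ s, 0 < w v}

theorem openSimplex_subset_convexHull : openSimplex 𝕜 s ⊆ convexHull 𝕜 (s : Set E) :=
  fun _ ⟨_, hw, _⟩ ↦ hw.mem_convexHull

theorem openSimplex_nonempty (hs : s.Nonempty) : (openSimplex 𝕜 s).Nonempty := by
  classical
  have hcard : (0 : 𝕜) < s.card := by exact_mod_cast hs.card_pos
  refine ⟨_, fun v ↦ if v ∈ s then (s.card : 𝕜)⁻¹ else 0,
    ⟨fun v ↦ ?_, fun v hv ↦ if_neg hv, ?_, rfl⟩, fun v hv ↦ ?_⟩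
  · split_ifs <;> positivity
  · simp [hcard.ne']
  · simpa only [if_pos hv] using inv_pos.2 hcard

theorem openSegment_subset_openSimplex (hx : x ∈ convexHull 𝕜 (s : Set E))
    (hy : y ∈ openSimplex 𝕜 s) : openSegment 𝕜 x y ⊆ openSimplex 𝕜 s := by
  obtain ⟨w₁, hw₁⟩ := exists_isBarycentric_of_mem_convexHull hx
  obtain ⟨w₂, hw₂, hw₂_pos⟩ := hy
  rintro _ ⟨a, b, ha, hb, hab, rfl⟩
  exact ⟨_, hw₁.convex_combination hw₂ ha.le hb.le hab, fun v hv ↦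
    add_pos_of_nonneg_of_pos (mul_nonneg ha.le (hw₁.nonneg v)) (mul_pos hb (hw₂_pos v hv))⟩

end Barycentric

section OpenSimplex

variable {E : Type*} [AddCommGroup E] [Module ℝ E] [TopologicalSpace E] [IsTopologicalAddGroup E]
  [ContinuousSMul ℝ E] {s : Finset E}

theorem convexHull_subset_closure_openSimplex (hs : s.Nonempty) :
    convexHull ℝ (s : Set E) ⊆ closure (openSimplex ℝ s) := by
  intro x hx
  obtain ⟨y, hy⟩ := openSimplex_nonempty (𝕜 := ℝ) hs
  exact closure_mono (openSegment_subset_openSimplex hx hy)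
    (segment_subset_closure_openSegment (left_mem_segment ℝ x y))

theorem exists_mem_openSegment_of_mem_intrinsicInterior {C : Set E} {p y : E}
    (hp : p ∈ intrinsicInterior ℝ C) (hy : y ∈ C) : ∃ x ∈ C, p ∈ openSegment ℝ x y := by
  obtain ⟨p, hp_interior, rfl⟩ := mem_intrinsicInterior.1 hp
  let line (r : ℝ) : affineSpan ℝ C :=
    ⟨AffineMap.lineMap (p : E) y r, AffineMap.lineMap_mem r p.2 (subset_affineSpan ℝ C hy)⟩
  have hline : Continuous line := AffineMap.lineMap_continuous.subtype_mk _
  have hline_zero : line 0 = p := Subtype.ext (AffineMap.lineMap_apply_zero (p : E) y)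
  have hmem : ∀ᶠ r in nhds (0 : ℝ), (line r : E) ∈ C :=
    hline.tendsto' 0 p hline_zero (mem_interior_iff_mem_nhds.1 hp_interior)
  obtain ⟨r, hr, hr_neg⟩ :=
    ((hmem.filter_mono nhdsWithin_le_nhds).and (self_mem_nhdsWithin (s := Iio (0 : ℝ)))).exists
  have hr_pos : 0 < 1 - r := by linarith
  refine ⟨line r, hr, (1 - r)⁻¹, 1 - (1 - r)⁻¹, inv_pos.2 hr_pos, ?_, by ring, ?_⟩
  · have : (1 - r)⁻¹ < 1 := inv_lt_one_of_one_lt₀ (by linarith)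
    linarith
  · simp only [line, AffineMap.lineMap_apply_module, smul_add, smul_smul]
    match_scalars <;> field_simp
    ring

theorem intrinsicInterior_convexHull_subset_openSimplex (hs : s.Nonempty) :
    intrinsicInterior ℝ (convexHull ℝ (s : Set E)) ⊆ openSimplex ℝ s := by
  intro p hp
  obtain ⟨y, hy⟩ := openSimplex_nonempty (𝕜 := ℝ) hs
  obtain ⟨x, hx, hpxy⟩ :=
    exists_mem_openSegment_of_mem_intrinsicInterior hp (openSimplex_subset_convexHull hy)
  exact openSegment_subset_openSimplex hx hy hpxy

end OpenSimplex

section BarycentricCoord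

variable {𝕜 E : Type*} [Field 𝕜] [LinearOrder 𝕜] [IsStrictOrderedRing 𝕜] [AddCommGroup E]
  [Module 𝕜 E] {K : SimplicialComplex 𝕜 E} {s t : Finset E} {w w₁ w₂ : E → 𝕜} {x p q : E}

theorem IsBarycentric.eq_of_mem_faces (hs : s ∈ K.faces) (ht : t ∈ K.faces)
    (h₁ : IsBarycentric s w₁ x) (h₂ : IsBarycentric t w₂ x) : w₁ = w₂ := by
  classical
  have hx : x ∈ convexHull 𝕜 ((s ∩ t : Finset E) : Set E) := by
    simpa only [Finset.coe_inter] using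
      K.inter_subset_convexHull hs ht ⟨h₁.mem_convexHull, h₂.mem_convexHull⟩
  obtain ⟨w, hw⟩ := exists_isBarycentric_of_mem_convexHull hx
  exact (h₁.eq_of_affineIndependent (K.indep hs) (hw.mono Finset.inter_subset_left)).trans
    (h₂.eq_of_affineIndependent (K.indep ht) (hw.mono Finset.inter_subset_right)).symm

open Classical in
/-- The barycentric coordinates of a point `x` of the polyhedron of `K`, as a function of the
vertex, with value `0` at the points that are not vertices of the carrier of `x`. Off the polyhedron
the coordinates are set to `0`. -/
noncomputable def barycentricCoord (K : SimplicialComplex 𝕜 E) (x : E) : E → 𝕜 :=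
  if h : ∃ w : E → 𝕜, ∃ s ∈ K.faces, IsBarycentric s w x then h.choose else 0

theorem IsBarycentric.barycentricCoord_eq (hs : s ∈ K.faces) (h : IsBarycentric s w x) :
    barycentricCoord K x = w := by
  have hex : ∃ w : E → 𝕜, ∃ s ∈ K.faces, IsBarycentric s w x := ⟨w, s, hs, h⟩
  obtain ⟨t, ht, hchoose⟩ := hex.choose_spec
  rw [barycentricCoord, dif_pos hex]
  exact hchoose.eq_of_mem_faces ht hs h

theorem isBarycentric_barycentricCoord (hs : s ∈ K.faces) (hx : x ∈ convexHull 𝕜 (s : Set E)) :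
    IsBarycentric s (barycentricCoord K x) x := by
  obtain ⟨w, hw⟩ := exists_isBarycentric_of_mem_convexHull hx
  rwa [hw.barycentricCoord_eq hs]

theorem barycentricCoord_pos (hs : s ∈ K.faces) (hp : p ∈ openSimplex 𝕜 s) {v : E} (hv : v ∈ s) :
    0 < barycentricCoord K p v := by
  obtain ⟨w, hw, hw_pos⟩ := hp
  simpa only [hw.barycentricCoord_eq hs] using hw_pos v hv

theorem exists_mem_openSimplex_of_mem_space (hx : x ∈ K.space) :
    ∃ s ∈ K.faces, x ∈ openSimplex 𝕜 s := by
  classical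
  obtain ⟨t, ht, hxt⟩ := K.mem_space_iff.1 hx
  obtain ⟨w, hw⟩ := exists_isBarycentric_of_mem_convexHull hxt
  have hw_support : IsBarycentric (t.filter (0 < w ·)) w x := by
    have hw_zero : ∀ v ∉ t.filter (0 < w ·), w v = 0 := fun v hv ↦ by
      by_cases hvt : v ∈ t
      · exact le_antisymm (not_lt.1 fun h ↦ hv (Finset.mem_filter.2 ⟨hvt, h⟩)) (hw.nonneg v)
      · exact hw.eq_zero_of_notMem v hvt
    refine ⟨hw.nonneg, hw_zero, ?_, ?_⟩
    · rw [← hw.sum_eq_one]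
      exact Finset.sum_subset (Finset.filter_subset _ _) fun v _ hv ↦ hw_zero v hv
    · rw [← hw.sum_smul_eq]
      exact Finset.sum_subset (Finset.filter_subset _ _) fun v _ hv ↦ by
        rw [hw_zero v hv, zero_smul]
  have hnonempty : (t.filter (0 < w ·)).Nonempty :=
    Finset.nonempty_of_sum_ne_zero (hw_support.sum_eq_one ▸ one_ne_zero)
  exact ⟨_, K.down_closed ht (Finset.filter_subset _ _) hnonempty, w, hw_support,
    fun v hv ↦ (Finset.mem_filter.1 hv).2⟩

end BarycentricCoord

section Stellar

variable {𝕜 E : Type*} [Field 𝕜] [LinearOrder 𝕜] [IsStrictOrderedRing 𝕜] [AddCommGroup E]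
  [Module 𝕜 E] {K : SimplicialComplex 𝕜 E} {s t : Finset E} {x p q : E}

/-- The barycentric coordinate of the new vertex `p` at `x` in the stellar subdivision of `K` at a
point `p` of the open simplex of `s`: the largest multiple of the coordinates of `p` that can be
subtracted from those of `x`. -/
noncomputable def stellarCoord (K : SimplicialComplex 𝕜 E) (hs : s.Nonempty) (p x : E) : 𝕜 :=
  s.inf' hs fun v ↦ barycentricCoord K x v / barycentricCoord K p v

/-- The map on the polyhedron of `K` that is simplicial from the stellar subdivision of `K` at `p`
to the stellar subdivision at `q`, sends `p` to `q` and fixes the vertices of `K`; here `p` and `q`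
are points of the open simplex of `s`. -/
noncomputable def stellarShift (K : SimplicialComplex 𝕜 E) (hs : s.Nonempty) (p q x : E) : E :=
  x + stellarCoord K hs p x • (q - p)

theorem stellarCoord_self (hs : s ∈ K.faces) (hp : p ∈ openSimplex 𝕜 s) :
    stellarCoord K (K.nonempty_of_mem_faces hs) p p = 1 := by
  rw [stellarCoord, Finset.inf'_congr _ rfl fun v hv ↦ div_self (barycentricCoord_pos hs hp hv).ne',
    Finset.inf'_const]

theorem stellarCoord_nonneg (hs : s ∈ K.faces) (hp : p ∈ openSimplex 𝕜 s) (hx : x ∈ K.space) :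
    0 ≤ stellarCoord K (K.nonempty_of_mem_faces hs) p x := by
  obtain ⟨t, ht, hxt⟩ := K.mem_space_iff.1 hx
  exact Finset.le_inf' _ _ fun v hv ↦
    div_nonneg ((isBarycentric_barycentricCoord ht hxt).nonneg v) (barycentricCoord_pos hs hp hv).le

theorem stellarCoord_mul_le (hs : s ∈ K.faces) (hp : p ∈ openSimplex 𝕜 s) {v : E} (hv : v ∈ s) :
    stellarCoord K (K.nonempty_of_mem_faces hs) p x * barycentricCoord K p v ≤
      barycentricCoord K x v :=
  (le_div_iff₀ (barycentricCoord_pos hs hp hv)).1 (Finset.inf'_le _ hv)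

theorem exists_stellarCoord_mul_eq (hs : s ∈ K.faces) (hp : p ∈ openSimplex 𝕜 s) (x : E) :
    ∃ v ∈ s, stellarCoord K (K.nonempty_of_mem_faces hs) p x * barycentricCoord K p v =
      barycentricCoord K x v := by
  obtain ⟨v, hv, heq⟩ := Finset.exists_mem_eq_inf' (K.nonempty_of_mem_faces hs)
    fun v ↦ barycentricCoord K x v / barycentricCoord K p v
  exact ⟨v, hv, (eq_div_iff (barycentricCoord_pos hs hp hv).ne').1 heq⟩

theorem stellarCoord_eq_zero_of_not_subset (hs : s ∈ K.faces) (hp : p ∈ openSimplex 𝕜 s)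
    (ht : t ∈ K.faces) (hx : x ∈ convexHull 𝕜 (t : Set E)) (hst : ¬ s ⊆ t) :
    stellarCoord K (K.nonempty_of_mem_faces hs) p x = 0 := by
  obtain ⟨v, hvs, hvt⟩ := Finset.not_subset.1 hst
  have hle := stellarCoord_mul_le (x := x) hs hp hvs
  rw [(isBarycentric_barycentricCoord ht hx).eq_zero_of_notMem v hvt] at hle
  exact le_antisymm (nonpos_of_mul_nonpos_left hle (barycentricCoord_pos hs hp hvs))
    (stellarCoord_nonneg hs hp (K.convexHull_subset_space ht hx))

theorem isBarycentric_stellarShift (hs : s ∈ K.faces) (hp : p ∈ openSimplex 𝕜 s)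
    (hq : q ∈ openSimplex 𝕜 s) (ht : t ∈ K.faces) (hx : x ∈ convexHull 𝕜 (t : Set E)) :
    IsBarycentric t (fun v ↦ barycentricCoord K x v +
        stellarCoord K (K.nonempty_of_mem_faces hs) p x *
          (barycentricCoord K q v - barycentricCoord K p v))
      (stellarShift K (K.nonempty_of_mem_faces hs) p q x) := by
  have hbx := isBarycentric_barycentricCoord ht hx
  have hbp := isBarycentric_barycentricCoord hs (openSimplex_subset_convexHull hp)
  have hbq := isBarycentric_barycentricCoord hs (openSimplex_subset_convexHull hq)
  by_cases hst : s ⊆ t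
  · refine hbx.add_smul_sub (hbp.mono hst) (hbq.mono hst) fun v ↦ ?_
    by_cases hv : v ∈ s
    · have hle := stellarCoord_mul_le (x := x) hs hp hv
      have hmul := mul_nonneg (stellarCoord_nonneg hs hp (K.convexHull_subset_space ht hx))
        (hbq.nonneg v)
      linarith
    · simpa [hbp.eq_zero_of_notMem v hv, hbq.eq_zero_of_notMem v hv] using hbx.nonneg v
  · simpa [stellarShift, stellarCoord_eq_zero_of_not_subset hs hp ht hx hst] using hbx

theorem stellarShift_mem_space (hs : s ∈ K.faces) (hp : p ∈ openSimplex 𝕜 s)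
    (hq : q ∈ openSimplex 𝕜 s) (hx : x ∈ K.space) :
    stellarShift K (K.nonempty_of_mem_faces hs) p q x ∈ K.space := by
  obtain ⟨t, ht, hxt⟩ := K.mem_space_iff.1 hx
  exact K.convexHull_subset_space ht (isBarycentric_stellarShift hs hp hq ht hxt).mem_convexHull

theorem stellarCoord_stellarShift (hs : s ∈ K.faces) (hp : p ∈ openSimplex 𝕜 s)
    (hq : q ∈ openSimplex 𝕜 s) (hx : x ∈ K.space) :
    stellarCoord K (K.nonempty_of_mem_faces hs) q
        (stellarShift K (K.nonempty_of_mem_faces hs) p q x) =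
      stellarCoord K (K.nonempty_of_mem_faces hs) p x := by
  obtain ⟨t, ht, hxt⟩ := K.mem_space_iff.1 hx
  have hcoord := (isBarycentric_stellarShift hs hp hq ht hxt).barycentricCoord_eq ht
  obtain ⟨u, hu, hmin⟩ := exists_stellarCoord_mul_eq hs hp x
  refine le_antisymm ?_ (Finset.le_inf' _ _ fun v hv ↦ ?_)
  · refine le_of_mul_le_mul_right ?_ (barycentricCoord_pos hs hq hu)
    refine (stellarCoord_mul_le hs hq hu).trans_eq ?_
    simp only [hcoord, ← hmin]
    ring
  · rw [le_div_iff₀ (barycentricCoord_pos hs hq hv), hcoord]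
    linarith [stellarCoord_mul_le (x := x) hs hp hv]

theorem stellarShift_self (hs : s ∈ K.faces) (hp : p ∈ openSimplex 𝕜 s) :
    stellarShift K (K.nonempty_of_mem_faces hs) p q p = q := by
  rw [stellarShift, stellarCoord_self hs hp, one_smul, add_sub_cancel]

theorem stellarShift_stellarShift (hs : s ∈ K.faces) (hp : p ∈ openSimplex 𝕜 s)
    (hq : q ∈ openSimplex 𝕜 s) (hx : x ∈ K.space) :
    stellarShift K (K.nonempty_of_mem_faces hs) q p
      (stellarShift K (K.nonempty_of_mem_faces hs) p q x) = x := by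
  rw [stellarShift, stellarCoord_stellarShift hs hp hq hx, stellarShift, add_assoc, ← smul_add,
    sub_add_sub_cancel, sub_self, smul_zero, add_zero]

end Stellar

section Topology

variable {E : Type*} [AddCommGroup E] [Module ℝ E] [TopologicalSpace E]
  {K : SimplicialComplex ℝ E} {s : Finset E} {p q : E}

/-- The closed simplices of `K` form a locally finite family in the polyhedron of `K` (not
necessarily in the ambient space). -/
def IsLocallyFiniteComplex (K : SimplicialComplex ℝ E) : Prop :=
  LocallyFinite fun s : K.faces ↦ ((↑) ⁻¹' convexHull ℝ (s : Set E) : Set K.space)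

theorem isLocallyFiniteComplex_of_forall_exists_isOpen
    (h : ∀ p ∈ K.space, ∃ V : Set E, IsOpen V ∧ p ∈ V ∧
      {s | s ∈ K.faces ∧ (V ∩ convexHull ℝ (s : Set E)).Nonempty}.Finite) :
    IsLocallyFiniteComplex K := by
  intro p
  obtain ⟨V, hV, hpV, hfin⟩ := h p p.2
  refine ⟨(↑) ⁻¹' V, (hV.preimage continuous_subtype_val).mem_nhds hpV,
    (hfin.preimage Subtype.val_injective.injOn).subset ?_⟩
  rintro s ⟨x, hxs, hxV⟩
  exact ⟨s.2, x, hxV, hxs⟩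

variable [IsTopologicalAddGroup E] [ContinuousSMul ℝ E] [T2Space E]

theorem continuousOn_barycentricCoord (hs : s ∈ K.faces) (v : E) :
    ContinuousOn (barycentricCoord K · v) (convexHull ℝ (s : Set E)) := by
  classical
  have hbary (w : stdSimplex ℝ s) :
      IsBarycentric s (fun v ↦ if h : v ∈ s then w ⟨v, h⟩ else 0) (∑ v, w v • (v : E)) := by
    refine ⟨fun v ↦ ?_, fun v hv ↦ dif_neg hv, ?_, ?_⟩
    · split_ifs
      exacts [w.2.1 _, le_rfl]
    · rw [← Finset.sum_coe_sort]
      simp only [Subtype.coe_eta, Finset.coe_mem, dite_true]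
      exact w.2.2
    · rw [← Finset.sum_coe_sort]
      simp
  let toSimplex (w : stdSimplex ℝ s) : convexHull ℝ (s : Set E) := ⟨_, (hbary w).mem_convexHull⟩
  have hcont : Continuous toSimplex := by
    refine Continuous.subtype_mk (continuous_finsetSum _ fun v _ ↦ ?_) _
    exact ((continuous_apply v).comp continuous_subtype_val).smul continuous_const
  have hsurj : Function.Surjective toSimplex := by
    rintro ⟨x, hx⟩
    obtain ⟨w, hw⟩ := exists_isBarycentric_of_mem_convexHull hx
    exact ⟨⟨fun v ↦ w v, fun v ↦ hw.nonneg v, (Finset.sum_coe_sort s w).trans hw.sum_eq_one⟩,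
      Subtype.ext ((Finset.sum_coe_sort s fun v ↦ w v • v).trans hw.sum_smul_eq)⟩
  rw [continuousOn_iff_continuous_domRestrict,
    (Topology.IsQuotientMap.of_surjective_continuous hsurj hcont).continuous_iff]
  have hcoord : ((convexHull ℝ (s : Set E)).domRestrict (barycentricCoord K · v)) ∘ toSimplex =
      fun w ↦ if h : v ∈ s then w ⟨v, h⟩ else 0 :=
    funext fun w ↦ congrFun ((hbary w).barycentricCoord_eq hs) v
  rw [hcoord]
  split_ifs with hv
  · exact (continuous_apply _).comp continuous_subtype_val
  · exact continuous_const

theorem continuous_stellarShift (hK : IsLocallyFiniteComplex K) (hs : s.Nonempty) (p q : E) :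
    Continuous fun x : K.space ↦ stellarShift K hs p q x := by
  refine hK.continuous ?_ ?_ ?_
  · exact eq_univ_of_forall fun x ↦ by
      obtain ⟨t, ht, hxt⟩ := K.mem_space_iff.1 x.2
      exact mem_iUnion.2 ⟨⟨t, ht⟩, hxt⟩
  · exact fun t ↦ (t.1.finite_toSet.isCompact_convexHull ℝ).isClosed.preimage
      continuous_subtype_val
  · intro t
    have hcoord : ContinuousOn (stellarCoord K hs p) (convexHull ℝ (t : Set E)) :=
      ContinuousOn.finset_inf'_apply hs fun v _ ↦
        (continuousOn_barycentricCoord t.2 v).div_const _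
    exact (continuousOn_id.add (hcoord.smul continuousOn_const)).comp
      continuous_subtype_val.continuousOn (mapsTo_preimage _ _)

theorem exists_homeomorph_space_apply_eq (hK : IsLocallyFiniteComplex K) (hs : s ∈ K.faces)
    (hp : p ∈ openSimplex ℝ s) (hq : q ∈ openSimplex ℝ s) :
    ∃ h : K.space ≃ₜ K.space, ∀ x : K.space, (x : E) = p → (h x : E) = q := by
  have hne := K.nonempty_of_mem_faces hs
  refine ⟨{ toFun := fun x ↦ ⟨stellarShift K hne p q x, stellarShift_mem_space hs hp hq x.2⟩
            invFun := fun x ↦ ⟨stellarShift K hne q p x, stellarShift_mem_space hs hq hp x.2⟩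
            left_inv := fun x ↦ Subtype.ext (stellarShift_stellarShift hs hp hq x.2)
            right_inv := fun x ↦ Subtype.ext (stellarShift_stellarShift hs hq hp x.2)
            continuous_toFun := (continuous_stellarShift hK hne p q).subtype_mk _
            continuous_invFun := (continuous_stellarShift hK hne q p).subtype_mk _ }, ?_⟩
  rintro x rfl
  exact stellarShift_self hs hp

variable {C : Set E}

theorem convexHull_subset_of_homeomorph_invariant (hK : IsLocallyFiniteComplex K)
    (hC : IsClosed C) (hinv : ∀ (h : K.space ≃ₜ K.space) (x : K.space), (x : E) ∈ C → (h x : E) ∈ C)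
    (hs : s ∈ K.faces) (hp : p ∈ openSimplex ℝ s) (hpC : p ∈ C) :
    convexHull ℝ (s : Set E) ⊆ C := by
  have hopen : openSimplex ℝ s ⊆ C := fun q hq ↦ by
    obtain ⟨h, hpq⟩ := exists_homeomorph_space_apply_eq hK hs hp hq
    let x : K.space := ⟨p, K.convexHull_subset_space hs (openSimplex_subset_convexHull hp)⟩
    exact hpq x rfl ▸ hinv h x hpC
  exact (convexHull_subset_closure_openSimplex (K.nonempty_of_mem_faces hs)).trans
    (closure_minimal hopen hC)

theorem inter_space_eq_biUnion_of_homeomorph_invariant (hK : IsLocallyFiniteComplex K)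
    (hC : IsClosed C)
    (hinv : ∀ (h : K.space ≃ₜ K.space) (x : K.space), (x : E) ∈ C → (h x : E) ∈ C) :
    C ∩ K.space =
      ⋃ s ∈ {s ∈ K.faces | convexHull ℝ (s : Set E) ⊆ C}, convexHull ℝ (s : Set E) := by
  refine Subset.antisymm ?_ (iUnion₂_subset fun s hs ↦
    subset_inter hs.2 (K.convexHull_subset_space hs.1))
  rintro p ⟨hpC, hpK⟩
  obtain ⟨s, hs, hps⟩ := exists_mem_openSimplex_of_mem_space hpK
  exact mem_biUnion (x := s)
    ⟨hs, convexHull_subset_of_homeomorph_invariant hK hC hinv hs hps hpC⟩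
    (openSimplex_subset_convexHull hps)

end Topology

section ManifoldPoint

variable {k M N : ℕ}

theorem isOpen_setOf_isManifoldPoint (S : Set (EuclideanSpace ℝ (Fin N))) :
    IsOpen {p | IsManifoldPoint k S p} :=
  isOpen_iff_forall_mem_open.2 fun _ ⟨V, hV, hpV, hmodel⟩ ↦
    ⟨V, fun _ hx ↦ ⟨V, hV, hx, hmodel⟩, hV, hpV⟩

theorem IsManifoldPoint.map_homeomorph {S : Set (EuclideanSpace ℝ (Fin N))}
    {T : Set (EuclideanSpace ℝ (Fin M))} (e : S ≃ₜ T) {p : S} (hp : IsManifoldPoint k S p) :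
    IsManifoldPoint k T (e p) := by
  obtain ⟨V, hV, hpV, hmodel⟩ := hp
  obtain ⟨W, hW, hWV⟩ := isOpen_induced_iff.1
    ((hV.preimage continuous_subtype_val).preimage e.symm.continuous)
  have hmem (y : T) : ↑y ∈ W ↔ ↑(e.symm y) ∈ V := Set.ext_iff.1 hWV y
  let restrict : ↥(V ∩ S) ≃ₜ ↥(W ∩ T) :=
    { toFun := fun x ↦ ⟨e ⟨x, x.2.2⟩, (hmem _).2 (by simpa using x.2.1), (e _).2⟩
      invFun := fun y ↦ ⟨e.symm ⟨y, y.2.2⟩, (hmem ⟨y, y.2.2⟩).1 y.2.1, (e.symm _).2⟩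
      left_inv := fun x ↦ by simp
      right_inv := fun y ↦ by simp
      continuous_toFun := by fun_prop
      continuous_invFun := by fun_prop }
  exact ⟨W, hW, (hmem _).2 (by simpa using hpV), hmodel.imp
    (fun ⟨f⟩ ↦ ⟨restrict.symm.trans f⟩) (fun ⟨f⟩ ↦ ⟨restrict.symm.trans f⟩)⟩

end ManifoldPoint

theorem nonManifoldPoints_subcomplex_general
    {N k : ℕ} (K : SimplicialComplex ℝ (EuclideanSpace ℝ (Fin N)))
    (hlf : ∀ p ∈ K.space, ∃ V : Set (EuclideanSpace ℝ (Fin N)), IsOpen V ∧ p ∈ V ∧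
      {s | s ∈ K.faces ∧ (V ∩ convexHull ℝ (s : Set (EuclideanSpace ℝ (Fin N)))).Nonempty}.Finite) :
    (∀ s ∈ K.faces,
      (∃ p ∈ intrinsicInterior ℝ (convexHull ℝ (s : Set (EuclideanSpace ℝ (Fin N)))),
          ¬ IsManifoldPoint k K.space p) →
      ∀ q ∈ convexHull ℝ (s : Set (EuclideanSpace ℝ (Fin N))),
        ¬ IsManifoldPoint k K.space q) ∧
    (∃ C : Set (EuclideanSpace ℝ (Fin N)), IsClosed C ∧
      {p | p ∈ K.space ∧ ¬ IsManifoldPoint k K.space p} = C ∩ K.space) ∧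
    (∃ F ⊆ K.faces,
      (∀ s ∈ F, ∀ t ∈ K.faces, t ⊆ s → t ∈ F) ∧
      {p | p ∈ K.space ∧ ¬ IsManifoldPoint k K.space p} =
        ⋃ s ∈ F, convexHull ℝ (s : Set (EuclideanSpace ℝ (Fin N)))) := by
  have hK : IsLocallyFiniteComplex K := isLocallyFiniteComplex_of_forall_exists_isOpen hlf
  have hclosed : IsClosed {p | ¬ IsManifoldPoint k K.space p} :=
    (isOpen_setOf_isManifoldPoint K.space).isClosed_compl
  have hinv : ∀ (h : K.space ≃ₜ K.space) (x : K.space),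
      ¬ IsManifoldPoint k K.space x → ¬ IsManifoldPoint k K.space (h x) :=
    fun h x hx hhx ↦ hx (by simpa using hhx.map_homeomorph h.symm)
  have hset : {p | p ∈ K.space ∧ ¬ IsManifoldPoint k K.space p} =
      {p | ¬ IsManifoldPoint k K.space p} ∩ K.space := inter_comm _ _
  refine ⟨?_, ⟨_, hclosed, hset⟩, _, sep_subset _ _, ?_,
    hset.trans (inter_space_eq_biUnion_of_homeomorph_invariant hK hclosed hinv)⟩
  · rintro s hs ⟨p, hp, hpn⟩
    exact convexHull_subset_of_homeomorph_invariant hK hclosed hinv hs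
      (intrinsicInterior_convexHull_subset_openSimplex (K.nonempty_of_mem_faces hs) hp) hpn
  · rintro s ⟨-, hsn⟩ t ht hts
    exact ⟨ht, (convexHull_mono (Finset.coe_subset.2 hts)).trans hsn⟩

/-- The non-manifold points of the polyhedron of a locally finite simplicial complex `K`
of dimension `k` form a union of closed simplices of `K`: if some point of an open simplex
of `K` is a non-manifold point, then every point of the corresponding closed simplex is a
non-manifold point; consequently the set of non-manifold points is closed in `|K|` and is
triangulated by a subcomplex of `K`. -/
theorem nonManifoldPoints_subcomplex
    {N k : ℕ} (K : SimplicialComplex ℝ (EuclideanSpace ℝ (Fin N)))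
    (hlf : ∀ p ∈ K.space, ∃ V : Set (EuclideanSpace ℝ (Fin N)), IsOpen V ∧ p ∈ V ∧
      {s | s ∈ K.faces ∧ (V ∩ convexHull ℝ (s : Set (EuclideanSpace ℝ (Fin N)))).Nonempty}.Finite)
    (hdim : ∀ s ∈ K.faces, s.card ≤ k + 1) :
    (∀ s ∈ K.faces,
      (∃ p ∈ intrinsicInterior ℝ (convexHull ℝ (s : Set (EuclideanSpace ℝ (Fin N)))),
          ¬ IsManifoldPoint k K.space p) →
      ∀ q ∈ convexHull ℝ (s : Set (EuclideanSpace ℝ (Fin N))),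
        ¬ IsManifoldPoint k K.space q) ∧
    (∃ C : Set (EuclideanSpace ℝ (Fin N)), IsClosed C ∧
      {p | p ∈ K.space ∧ ¬ IsManifoldPoint k K.space p} = C ∩ K.space) ∧
    (∃ F ⊆ K.faces,
      (∀ s ∈ F, ∀ t ∈ K.faces, t ⊆ s → t ∈ F) ∧
      {p | p ∈ K.space ∧ ¬ IsManifoldPoint k K.space p} =
        ⋃ s ∈ F, convexHull ℝ (s : Set (EuclideanSpace ℝ (Fin N)))) :=
  nonManifoldPoints_subcomplex_general K hlf
end

section
/- Let K be a finite simplicial complex of dimension k in some Euclidean space, and let S be a subset of the set of simplices of K that contains every simplex of dimension ≤ r, for some integer r ≥ 0. Let |K \ S| denote the union of the open simplices int(σ) over all simplices σ of K not belonging to S. Then |K \ S| is homotopy equivalent to a finite CW complex of dimension ≤ k − r − 1. -/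
open Set Geometry

/-!
Write `P = K \ S`, and `|P|` for the union of its open simplices. The barycenters of the simplices
of `P` span a copy of the order complex of `P` inside `|P|`, onto which `|P|` deforms. The faces of
the order complex are chains in `P`; cardinality is injective on a chain and takes values in
`[r + 2, k + 1]`, so a chain has at most `k - r` members.

The deformation is explicit. In one direction the vertex `σ` of the order complex goes to the
barycenter of `σ`. In the other, `w` goes to the point with coordinates proportional to
`∏ v ∈ σ, (w v * ∏ u ∉ σ, max 0 (w v - w u))`; this is nonzero only if `σ` is a strict superlevel
set of `w`, so the support is a chain, with greatest element the support of `w`. Starting in `|P|`,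
the composite preserves supports; starting in the order complex, the supports of a point and of its
image together form a chain. In both cases the straight-line homotopy to the identity therefore
stays inside the space.
-/

theorem support_of_mem_openSegment {ι : Type*} {w w' z : ι → ℝ} (hw : 0 ≤ w) (hw' : 0 ≤ w')
    (hz : z ∈ openSegment ℝ w w') :
    Function.support z = Function.support w ∪ Function.support w' := by
  obtain ⟨a, b, ha, hb, -, rfl⟩ := hz
  ext i
  have hi : a * w i + b * w' i = 0 ↔ w i = 0 ∧ w' i = 0 := by
    rw [add_eq_zero_iff_of_nonneg (mul_nonneg ha.le (hw i)) (mul_nonneg hb.le (hw' i)),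
      mul_eq_zero_iff_left ha.ne', mul_eq_zero_iff_left hb.ne']
  simp only [Function.mem_support, Pi.add_apply, Pi.smul_apply, smul_eq_mul, ne_eq, hi, mem_union,
    not_and_or]

/-! ### Unions of open simplices of a standard simplex -/

section OpenRealization

variable {ι : Type*} [Fintype ι]

/-- The union of the open simplices of the standard simplex on `ι` whose vertex sets belong to
`F`: the points whose set of nonzero barycentric coordinates is a member of `F`. For the faces `F`
of an abstract simplicial complex this is its geometric realization; `F` need not be closed under
passing to subsets. -/
def openRealization (F : Set (Finset ι)) : Set (ι → ℝ) :=
  {w ∈ stdSimplex ℝ ι | ∃ s ∈ F, Function.support w = s}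

theorem support_nonempty_of_mem_stdSimplex {w : ι → ℝ} (hw : w ∈ stdSimplex ℝ ι) :
    (Function.support w).Nonempty := by
  rw [Function.support_nonempty_iff]
  rintro rfl
  simpa using hw.2

theorem openRealization_mono {F G : Set (Finset ι)} (h : F ⊆ G) :
    openRealization F ⊆ openRealization G :=
  fun _ ⟨hw, s, hs, hsupp⟩ => ⟨hw, s, h hs, hsupp⟩

theorem mem_openRealization_of_support_subset {F : Set (Finset ι)}
    (hF : IsRelLowerSet F Finset.Nonempty) {s : Finset ι} (hs : s ∈ F) {w : ι → ℝ}
    (hw : w ∈ stdSimplex ℝ ι) (hws : Function.support w ⊆ s) : w ∈ openRealization F := by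
  lift Function.support w to Finset ι using toFinite _ with t ht
  refine ⟨hw, t, (hF hs).2 (Finset.coe_subset.1 hws) ?_, ht.symm⟩
  exact Finset.coe_nonempty.1 (ht ▸ support_nonempty_of_mem_stdSimplex hw)

theorem isCompact_openRealization {F : Set (Finset ι)} (hF : IsRelLowerSet F Finset.Nonempty) :
    IsCompact (openRealization F) := by
  have closed_faces : openRealization F =
      ⋃ s ∈ F, stdSimplex ℝ ι ∩ (↑s : Set ι)ᶜ.pi fun _ => {0} := by
    ext w
    simp only [mem_iUnion, exists_prop, mem_inter_iff, mem_pi, mem_singleton_iff]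
    exact ⟨fun ⟨hw, s, hs, hws⟩ => ⟨s, hs, hw, Function.support_subset_iff'.1 hws.subset⟩,
      fun ⟨_, hs, hw, hws⟩ =>
        mem_openRealization_of_support_subset hF hs hw (Function.support_subset_iff'.2 hws)⟩
  rw [closed_faces]
  exact (toFinite F).isCompact_biUnion fun s _ =>
    (isCompact_stdSimplex ℝ ι).inter_right (isClosed_set_pi fun _ _ => isClosed_singleton)

theorem segment_subset_openRealization {F : Set (Finset ι)} {w w' : ι → ℝ}
    (hw : w ∈ openRealization F) (hw' : w' ∈ openRealization F) {s : Finset ι} (hs : s ∈ F)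
    (hsupp : Function.support w ∪ Function.support w' = s) :
    segment ℝ w w' ⊆ openRealization F := by
  rw [← openSegment_subset_iff_segment_subset hw hw']
  intro z hz
  refine ⟨(convex_stdSimplex ℝ ι).openSegment_subset hw.1 hw'.1 hz, s, hs, ?_⟩
  rw [support_of_mem_openSegment hw.1.1 hw'.1.1 hz, hsupp]

end OpenRealization

theorem homotopic_of_segment_subset {X E : Type*} [TopologicalSpace X] [AddCommGroup E]
    [Module ℝ E] [TopologicalSpace E] [ContinuousAdd E] [ContinuousSMul ℝ E] {A : Set E}
    (f g : C(X, A)) (h : ∀ x, segment ℝ (f x : E) (g x) ⊆ A) : f.Homotopic g := by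
  refine ⟨⟨⟨fun q => ⟨(1 - (q.1 : ℝ)) • (f q.2 : E) + (q.1 : ℝ) • (g q.2 : E), h q.2 ?_⟩,
    ?_⟩, ?_, ?_⟩⟩
  · exact ⟨1 - q.1, q.1, unitInterval.one_minus_nonneg q.1, unitInterval.nonneg q.1,
      sub_add_cancel _ _, rfl⟩
  · exact Continuous.subtype_mk (by fun_prop) _
  · intro x
    simp
  · intro x
    simp

/-- The order complex of `Q`: its faces are the nonempty finite chains of `Q`. -/
def orderComplex (Q : Type*) [LE Q] : PreAbstractSimplicialComplex Q where
  faces := {c | c.Nonempty ∧ IsChain (· ≤ ·) (c : Set Q)}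
  isRelLowerSet_faces := fun _ hc => ⟨hc.1, fun _ hdc hd => ⟨hd, hc.2.mono hdc⟩⟩

theorem mem_openRealization_orderComplex {Q : Type*} [LE Q] [Fintype Q] {y : Q → ℝ} :
    y ∈ openRealization (orderComplex Q).faces ↔
      y ∈ stdSimplex ℝ Q ∧ IsChain (· ≤ ·) (Function.support y) := by
  refine ⟨fun ⟨hy, c, hc, hyc⟩ => ⟨hy, hyc ▸ hc.2⟩, fun ⟨hy, hchain⟩ => ?_⟩
  have hne := support_nonempty_of_mem_stdSimplex hy
  lift Function.support y to Finset Q using toFinite _ with c hc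
  exact ⟨hy, c, ⟨Finset.coe_nonempty.1 hne, hchain⟩, hc.symm⟩

theorem segment_subset_openRealization_orderComplex {Q : Type*} [LE Q] [Fintype Q] {y y' : Q → ℝ}
    (hy : y ∈ openRealization (orderComplex Q).faces)
    (hy' : y' ∈ openRealization (orderComplex Q).faces)
    (hchain : IsChain (· ≤ ·) (Function.support y ∪ Function.support y')) :
    segment ℝ y y' ⊆ openRealization (orderComplex Q).faces := by
  have hne := (support_nonempty_of_mem_stdSimplex hy.1).inl (t := Function.support y')
  obtain ⟨c, hc⟩ := (toFinite (Function.support y ∪ Function.support y')).exists_finset_coe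
  rw [← hc] at hne hchain
  exact segment_subset_openRealization hy hy' ⟨Finset.coe_nonempty.1 hne, hchain⟩ hc.symm

theorem exists_isGreatest_of_mem_faces_orderComplex {Q : Type*} [Preorder Q] {c : Finset Q}
    (hc : c ∈ (orderComplex Q).faces) : ∃ τ, IsGreatest (c : Set Q) τ := by
  obtain ⟨τ, hτ⟩ := c.exists_maximal hc.1
  exact ⟨τ, hτ.prop, fun σ hσ => (hc.2.total hσ hτ.prop).elim id fun h => hτ.le_of_ge hσ h⟩

theorem card_add_le_of_mem_faces_orderComplex {ι : Type*} {P : Set (Finset ι)} {a b : ℕ}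
    (hP : ∀ σ ∈ P, σ.card ∈ Icc a b) {c : Finset P} (hc : c ∈ (orderComplex P).faces) :
    c.card + a ≤ b + 1 := by
  have card_injOn : InjOn (fun σ : P => (σ : Finset ι).card) c := by
    intro σ hσ τ hτ heq
    rcases hc.2.total hσ hτ with h | h
    · exact Subtype.ext (Finset.eq_of_subset_of_card_le h heq.ge)
    · exact Subtype.ext (Finset.eq_of_subset_of_card_le h heq.le).symm
  have card_le : c.card ≤ (Finset.Icc a b).card :=
    Finset.card_le_card_of_injOn _ (fun σ _ => Finset.coe_Icc a b ▸ hP σ σ.2) card_injOn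
  obtain ⟨σ, -⟩ := hc.1
  have hab := hP σ σ.2
  rw [Nat.card_Icc] at card_le
  rw [mem_Icc] at hab
  omega

/-! ### The barycentric subdivision -/

section Subdivision

variable {ι : Type*}

/-- The barycenter of the face `s`, as a point of the standard simplex on `ι` when `s` is
nonempty; it is `0` for `s = ∅`. -/
noncomputable def faceBarycenter (s : Finset ι) : ι → ℝ :=
  (s : Set ι).indicator fun _ => (s.card : ℝ)⁻¹

theorem faceBarycenter_of_mem {s : Finset ι} {i : ι} (hi : i ∈ s) :
    faceBarycenter s i = (s.card : ℝ)⁻¹ :=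
  indicator_of_mem (Finset.mem_coe.2 hi) _

theorem faceBarycenter_of_notMem {s : Finset ι} {i : ι} (hi : i ∉ s) : faceBarycenter s i = 0 :=
  indicator_of_notMem (Finset.mem_coe.not.2 hi) _

theorem faceBarycenter_nonneg (s : Finset ι) : 0 ≤ faceBarycenter s :=
  indicator_nonneg fun _ _ => by positivity

theorem faceBarycenter_ne_zero_iff {s : Finset ι} {i : ι} : faceBarycenter s i ≠ 0 ↔ i ∈ s := by
  refine ⟨fun h => by_contra fun hi => h (faceBarycenter_of_notMem hi), fun hi => ?_⟩
  rw [faceBarycenter_of_mem hi]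
  exact inv_ne_zero (Nat.cast_ne_zero.2 (Finset.card_ne_zero_of_mem hi))

theorem faceBarycenter_mem_stdSimplex [Fintype ι] {s : Finset ι} (hs : s.Nonempty) :
    faceBarycenter s ∈ stdSimplex ℝ ι := by
  classical
  refine ⟨faceBarycenter_nonneg s, ?_⟩
  simp only [faceBarycenter, indicator_apply, Finset.mem_coe, Finset.sum_ite_mem,
    Finset.univ_inter, Finset.sum_const, nsmul_eq_mul]
  exact mul_inv_cancel₀ (Nat.cast_ne_zero.2 hs.card_ne_zero)

variable {P : Set (Finset ι)} [Fintype P]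

variable (P) in
/-- The linear map sending the vertex `σ` of the order complex of `P` to the barycenter of the
face `σ`. -/
noncomputable def barycenterMap : (P → ℝ) →ₗ[ℝ] ι → ℝ :=
  Fintype.linearCombination ℝ fun σ : P => faceBarycenter (σ : Finset ι)

theorem barycenterMap_apply (y : P → ℝ) (i : ι) :
    barycenterMap P y i = ∑ σ : P, y σ * faceBarycenter (σ : Finset ι) i := by
  simp only [barycenterMap, Fintype.linearCombination_apply, Finset.sum_apply, Pi.smul_apply,
    smul_eq_mul]

theorem support_barycenterMap {y : P → ℝ} (hy : 0 ≤ y) :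
    Function.support (barycenterMap P y) = ⋃ σ ∈ Function.support y, (σ : Finset ι) := by
  ext i
  have hnonneg : ∀ σ ∈ Finset.univ, 0 ≤ y σ * faceBarycenter (σ : Finset ι) i :=
    fun σ _ => mul_nonneg (hy σ) (faceBarycenter_nonneg _ i)
  simp only [Function.mem_support, barycenterMap_apply, ne_eq,
    Finset.sum_eq_zero_iff_of_nonneg hnonneg, Finset.mem_univ, true_imp_iff, not_forall,
    mul_eq_zero, not_or, mem_iUnion, exists_prop, Finset.mem_coe]
  simp only [← ne_eq, faceBarycenter_ne_zero_iff]

theorem support_barycenterMap_of_isGreatest {y : P → ℝ} (hy : 0 ≤ y) {τ : P}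
    (hτ : IsGreatest (Function.support y) τ) :
    Function.support (barycenterMap P y) = (τ : Finset ι) := by
  rw [support_barycenterMap hy]
  refine Subset.antisymm (iUnion₂_subset fun σ hσ => Finset.coe_subset.2 (hτ.2 hσ)) fun i hi => ?_
  exact mem_biUnion hτ.1 hi

theorem barycenterMap_mem_openRealization [Fintype ι] (hP : ∅ ∉ P) {y : P → ℝ}
    (hy : y ∈ openRealization (orderComplex P).faces) :
    barycenterMap P y ∈ openRealization P := by
  obtain ⟨hsimplex, c, hc, hyc⟩ := hy
  obtain ⟨τ, hτ⟩ := exists_isGreatest_of_mem_faces_orderComplex hc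
  refine ⟨?_, τ, τ.2, support_barycenterMap_of_isGreatest hsimplex.1 (hyc ▸ hτ)⟩
  rw [barycenterMap, Fintype.linearCombination_apply]
  exact (convex_stdSimplex ℝ ι).sum_mem (fun σ _ => hsimplex.1 σ) hsimplex.2 fun σ _ =>
    faceBarycenter_mem_stdSimplex (Finset.nonempty_iff_ne_empty.2 fun h => hP (h ▸ σ.2))

theorem barycenterMap_le_of_mem_of_notMem {y : P → ℝ} (hy : 0 ≤ y)
    (hchain : IsChain (· ≤ ·) (Function.support y)) {σ : P} (hσ : σ ∈ Function.support y)
    {u v : ι} (hv : v ∈ (σ : Finset ι)) (hu : u ∉ (σ : Finset ι)) :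
    barycenterMap P y u ≤ barycenterMap P y v := by
  rw [barycenterMap_apply, barycenterMap_apply]
  refine Finset.sum_le_sum fun ρ _ => ?_
  by_cases hρ : y ρ = 0
  · rw [hρ, zero_mul, zero_mul]
  refine mul_le_mul_of_nonneg_left ?_ (hy ρ)
  rcases hchain.total hσ hρ with hσρ | hρσ
  · rw [faceBarycenter_of_mem (hσρ hv)]
    exact indicator_le_self' (fun _ _ => by positivity) u
  · rw [faceBarycenter_of_notMem fun h => hu (hρσ h)]
    exact faceBarycenter_nonneg _ v

theorem subset_or_subset_of_superlevel {w : ι → ℝ} {σ τ : Finset ι}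
    (hσ : ∀ v ∈ σ, ∀ u ∉ σ, w u < w v) (hτ : ∀ v ∈ τ, ∀ u ∉ τ, w u ≤ w v) :
    σ ⊆ τ ∨ τ ⊆ σ := by
  by_contra! h
  obtain ⟨v, hvσ, hvτ⟩ := Finset.not_subset.1 h.1
  obtain ⟨u, huτ, huσ⟩ := Finset.not_subset.1 h.2
  exact (hσ v hvσ u huσ).not_ge (hτ u huτ v hvτ)

section SubdivisionMap

variable [Fintype ι] [DecidableEq ι]

/-- The unnormalized coordinate, at the barycenter of the face `σ`, of the point of the
subdivision assigned to `w`. It is positive exactly when all coordinates of `w` on `σ` are nonzero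
and exceed all coordinates off `σ`; such `σ` form a chain with greatest element the support of
`w`. -/
noncomputable def subdivisionWeight (w : ι → ℝ) (σ : Finset ι) : ℝ :=
  ∏ v ∈ σ, (w v * ∏ u ∈ σᶜ, max 0 (w v - w u))

theorem subdivisionWeight_nonneg {w : ι → ℝ} (hw : 0 ≤ w) (σ : Finset ι) :
    0 ≤ subdivisionWeight w σ :=
  Finset.prod_nonneg fun v _ =>
    mul_nonneg (hw v) (Finset.prod_nonneg fun _ _ => le_max_left _ _)

theorem subdivisionWeight_ne_zero_iff {w : ι → ℝ} {σ : Finset ι} :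
    subdivisionWeight w σ ≠ 0 ↔ ∀ v ∈ σ, w v ≠ 0 ∧ ∀ u ∉ σ, w u < w v := by
  simp only [subdivisionWeight, Finset.prod_ne_zero_iff, mul_ne_zero_iff, Finset.mem_compl, ne_eq,
    max_eq_left_iff, not_le, sub_pos]

theorem subdivisionWeight_support_ne_zero {w : ι → ℝ} (hw : 0 ≤ w) {s : Finset ι}
    (hs : Function.support w = s) : subdivisionWeight w s ≠ 0 := by
  have mem_iff (i : ι) : i ∈ s ↔ w i ≠ 0 := by
    rw [← Finset.mem_coe, ← hs, Function.mem_support]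
  refine subdivisionWeight_ne_zero_iff.2 fun v hv => ⟨(mem_iff v).1 hv, fun u hu => ?_⟩
  rw [not_not.1 (mt (mem_iff u).2 hu)]
  exact (hw v).lt_of_ne' ((mem_iff v).1 hv)

theorem continuous_subdivisionWeight (σ : Finset ι) :
    Continuous fun w : ι → ℝ => subdivisionWeight w σ := by
  unfold subdivisionWeight
  fun_prop

variable (P) in
/-- The coordinates, with respect to the barycenters of the faces in `P`, of the point of the
subdivision assigned to `w`. -/
noncomputable def subdivisionMap (w : ι → ℝ) (σ : P) : ℝ :=
  subdivisionWeight w σ / ∑ τ : P, subdivisionWeight w τ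

theorem sum_subdivisionWeight_pos {w : ι → ℝ} (hw : w ∈ openRealization P) :
    0 < ∑ τ : P, subdivisionWeight w τ := by
  obtain ⟨hsimplex, s, hs, hws⟩ := hw
  exact Finset.sum_pos' (fun τ _ => subdivisionWeight_nonneg hsimplex.1 τ)
    ⟨⟨s, hs⟩, Finset.mem_univ _,
      (subdivisionWeight_nonneg hsimplex.1 s).lt_of_ne'
        (subdivisionWeight_support_ne_zero hsimplex.1 hws)⟩

theorem mem_support_subdivisionMap {w : ι → ℝ} (hw : w ∈ openRealization P) {σ : P} :
    σ ∈ Function.support (subdivisionMap P w) ↔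
      ∀ v ∈ (σ : Finset ι), w v ≠ 0 ∧ ∀ u ∉ (σ : Finset ι), w u < w v := by
  rw [Function.mem_support, subdivisionMap, div_ne_zero_iff,
    and_iff_left (sum_subdivisionWeight_pos hw).ne', subdivisionWeight_ne_zero_iff]

theorem subdivisionMap_mem_openRealization {w : ι → ℝ} (hw : w ∈ openRealization P) :
    subdivisionMap P w ∈ openRealization (orderComplex P).faces := by
  have hsum := sum_subdivisionWeight_pos hw
  refine mem_openRealization_orderComplex.2 ⟨⟨fun σ => ?_, ?_⟩, fun σ hσ τ hτ _ => ?_⟩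
  · exact div_nonneg (subdivisionWeight_nonneg hw.1.1 σ) hsum.le
  · simp only [subdivisionMap, ← Finset.sum_div]
    exact div_self hsum.ne'
  · rw [mem_support_subdivisionMap hw] at hσ hτ
    exact subset_or_subset_of_superlevel (fun v hv => (hσ v hv).2)
      fun v hv u hu => ((hτ v hv).2 u hu).le

theorem support_barycenterMap_subdivisionMap {w : ι → ℝ} (hw : w ∈ openRealization P) :
    Function.support (barycenterMap P (subdivisionMap P w)) = Function.support w := by
  obtain ⟨s, hs, hws⟩ := hw.2
  rw [hws]
  refine support_barycenterMap_of_isGreatest (τ := ⟨s, hs⟩)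
    (subdivisionMap_mem_openRealization hw).1.1 ⟨?_, fun σ hσ v hv => ?_⟩
  · exact div_ne_zero (subdivisionWeight_support_ne_zero hw.1.1 hws)
      (sum_subdivisionWeight_pos hw).ne'
  · rw [← Finset.mem_coe, ← hws]
    exact ((mem_support_subdivisionMap hw).1 hσ v hv).1

theorem isChain_support_subdivisionMap_union_support {y : P → ℝ} (hP : ∅ ∉ P)
    (hy : y ∈ openRealization (orderComplex P).faces) :
    IsChain (· ≤ ·)
      (Function.support (subdivisionMap P (barycenterMap P y)) ∪ Function.support y) := by
  have hw := barycenterMap_mem_openRealization hP hy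
  have hchain := (mem_openRealization_orderComplex.1 hy).2
  refine isChain_union.2 ⟨(mem_openRealization_orderComplex.1
    (subdivisionMap_mem_openRealization hw)).2, hchain, fun σ hσ τ hτ _ => ?_⟩
  rw [mem_support_subdivisionMap hw] at hσ
  exact subset_or_subset_of_superlevel (fun v hv => (hσ v hv).2)
    fun v hv u hu => barycenterMap_le_of_mem_of_notMem hy.1.1 hchain hτ hv hu

variable (P) in
/-- The map from `|P|` to its barycentric subdivision with coordinates `subdivisionMap`. -/
noncomputable def toSubdivision :
    C(openRealization P, openRealization (orderComplex P).faces) where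
  toFun w := ⟨subdivisionMap P w, subdivisionMap_mem_openRealization w.2⟩
  continuous_toFun := by
    refine Continuous.subtype_mk (continuous_pi fun σ => ?_) _
    exact ((continuous_subdivisionWeight _).comp continuous_subtype_val).div
      (continuous_finsetSum _ fun τ _ =>
        (continuous_subdivisionWeight _).comp continuous_subtype_val)
      fun w => (sum_subdivisionWeight_pos w.2).ne'

/-- The map from the order complex of `P` to `|P|` which is linear on simplices and sends
vertices to barycenters. -/
noncomputable def ofSubdivision (hP : ∅ ∉ P) :
    C(openRealization (orderComplex P).faces, openRealization P) where
  toFun y := ⟨barycenterMap P y, barycenterMap_mem_openRealization hP y.2⟩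
  continuous_toFun := Continuous.subtype_mk
    ((barycenterMap P).continuous_of_finiteDimensional.comp continuous_subtype_val) _

theorem ofSubdivision_comp_toSubdivision_homotopic (hP : ∅ ∉ P) :
    ((ofSubdivision hP).comp (toSubdivision P)).Homotopic (ContinuousMap.id _) := by
  refine homotopic_of_segment_subset _ _ fun w => ?_
  obtain ⟨s, hs, hws⟩ := w.2.2
  refine segment_subset_openRealization (((ofSubdivision hP).comp (toSubdivision P)) w).2 w.2 hs ?_
  exact (congrArg (· ∪ _) (support_barycenterMap_subdivisionMap w.2)).trans
    ((union_self _).trans hws)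

theorem toSubdivision_comp_ofSubdivision_homotopic (hP : ∅ ∉ P) :
    ((toSubdivision P).comp (ofSubdivision hP)).Homotopic (ContinuousMap.id _) := by
  refine homotopic_of_segment_subset _ _ fun y => ?_
  exact segment_subset_openRealization_orderComplex
    (((toSubdivision P).comp (ofSubdivision hP)) y).2 y.2
    (isChain_support_subdivisionMap_union_support hP y.2)

/-- The homotopy equivalence between `|P|` and its barycentric subdivision. -/
noncomputable def subdivisionHomotopyEquiv (hP : ∅ ∉ P) :
    ContinuousMap.HomotopyEquiv (openRealization P) (openRealization (orderComplex P).faces) where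
  toFun := toSubdivision P
  invFun := ofSubdivision hP
  left_inv := ofSubdivision_comp_toSubdivision_homotopic hP
  right_inv := toSubdivision_comp_ofSubdivision_homotopic hP

end SubdivisionMap

end Subdivision

/-! ### Open simplices in a normed space -/

section OpenSimplex

variable {E : Type*} [NormedAddCommGroup E] [NormedSpace ℝ E] {κ : Type*} [Fintype κ]

theorem intrinsicInterior_eq_interior_of_affineSpan_eq_top {s : Set E}
    (hs : affineSpan ℝ s = ⊤) : intrinsicInterior ℝ s = interior s := by
  refine Subset.antisymm ?_ interior_subset_intrinsicInterior
  have hopen : IsOpen (affineSpan ℝ s : Set E) := by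
    rw [hs, AffineSubspace.top_coe]
    exact isOpen_univ
  exact hopen.isOpenMap_subtype_val.image_interior_subset _ |>.trans
    (interior_mono (image_preimage_subset _ _))

theorem mem_intrinsicInterior_convexHull_affineBasis (b : AffineBasis κ ℝ E) {x : E} :
    x ∈ intrinsicInterior ℝ (convexHull ℝ (range b)) ↔
      ∃ w ∈ stdSimplex ℝ κ, (∀ i, 0 < w i) ∧ ∑ i, w i • b i = x := by
  rw [intrinsicInterior_eq_interior_of_affineSpan_eq_top (by rw [affineSpan_convexHull, b.tot]),
    b.interior_convexHull, mem_ofPred_eq]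
  constructor
  · intro hx
    exact ⟨fun i => b.coord i x, ⟨fun i => (hx i).le, b.sum_coord_apply_eq_one x⟩, hx,
      b.linear_combination_coord_eq_self x⟩
  · rintro ⟨w, hw, hpos, rfl⟩ i
    rw [← Finset.univ.affineCombination_eq_linear_combination b w hw.2,
      b.coord_apply_combination_of_mem (Finset.mem_univ i) hw.2]
    exact hpos i

theorem exists_affineBasis_affineIsometry_comp_eq {κ : Type*} [Finite κ] [Nonempty κ]
    {q : κ → E} (hq : AffineIndependent ℝ q) :
    ∃ (b : AffineBasis κ ℝ (vectorSpan ℝ (range q))) (φ : vectorSpan ℝ (range q) →ᵃⁱ[ℝ] E),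
      ⇑φ ∘ b = q := by
  have := Fintype.ofFinite κ
  obtain ⟨i₀⟩ := ‹Nonempty κ›
  let φ : vectorSpan ℝ (range q) →ᵃⁱ[ℝ] E :=
    (AffineIsometryEquiv.vaddConst ℝ (q i₀)).toAffineIsometry.comp
      (vectorSpan ℝ (range q)).subtypeₗᵢ.toAffineIsometry
  let b : κ → vectorSpan ℝ (range q) := fun i =>
    ⟨q i -ᵥ q i₀, vsub_mem_vectorSpan ℝ (mem_range_self i) (mem_range_self i₀)⟩
  have hφb : ⇑φ ∘ b = q := funext fun i => sub_add_cancel (q i) (q i₀)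
  have hb : AffineIndependent ℝ b := .of_comp φ.toAffineMap (by rwa [φ.coe_toAffineMap, hφb])
  have card_eq : Fintype.card κ = Module.finrank ℝ (vectorSpan ℝ (range q)) + 1 :=
    (hq.finrank_vectorSpan_add_one).symm
  exact ⟨⟨b, hb, hb.affineSpan_eq_top_iff_card_eq_finrank_add_one.2 card_eq⟩, φ, hφb⟩

theorem mem_intrinsicInterior_convexHull_range {q : κ → E} (hq : AffineIndependent ℝ q) {x : E} :
    x ∈ intrinsicInterior ℝ (convexHull ℝ (range q)) ↔
      ∃ w ∈ stdSimplex ℝ κ, (∀ i, 0 < w i) ∧ ∑ i, w i • q i = x := by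
  cases isEmpty_or_nonempty κ
  · simp only [range_eq_empty, convexHull_empty, intrinsicInterior_empty,
      stdSimplex_of_isEmpty_index, mem_empty_iff_false, false_and, exists_false]
  obtain ⟨b, φ, hφb⟩ := exists_affineBasis_affineIsometry_comp_eq hq
  have map_sum {w : κ → ℝ} (hw : w ∈ stdSimplex ℝ κ) :
      φ (∑ i, w i • b i) = ∑ i, w i • q i := by
    rw [← Finset.univ.affineCombination_eq_linear_combination b w hw.2, ← φ.coe_toAffineMap,
      Finset.map_affineCombination _ _ _ hw.2, φ.coe_toAffineMap, hφb,
      Finset.univ.affineCombination_eq_linear_combination q w hw.2]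
  have himage : convexHull ℝ (range q) = φ '' convexHull ℝ (range b) := by
    rw [← φ.coe_toAffineMap, φ.toAffineMap.image_convexHull, ← range_comp, φ.coe_toAffineMap, hφb]
  rw [himage, φ.intrinsicInterior_image]
  simp only [mem_image, mem_intrinsicInterior_convexHull_affineBasis]
  constructor
  · rintro ⟨_, ⟨w, hw, hpos, rfl⟩, rfl⟩
    exact ⟨w, hw, hpos, (map_sum hw).symm⟩
  · rintro ⟨w, hw, hpos, rfl⟩
    exact ⟨_, ⟨w, hw, hpos, rfl⟩, map_sum hw⟩

theorem convexHull_range_eq_image_stdSimplex (q : κ → E) :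
    convexHull ℝ (range q) = Fintype.linearCombination ℝ q '' stdSimplex ℝ κ := by
  classical
  rw [← convexHull_rangle_single_eq_stdSimplex, LinearMap.image_convexHull, ← range_comp]
  congr 2
  ext i
  simp only [Function.comp_apply, Fintype.linearCombination_apply_single, one_smul]

end OpenSimplex

section Face

variable {ι : Type*} [Fintype ι] {t : Finset ι}

theorem sum_finset_smul_of_support_subset {M : Type*} [AddCommMonoid M] [Module ℝ M]
    {w : ι → ℝ} (hw : Function.support w ⊆ t) (p : ι → M) :
    ∑ i : t, w i • p i = ∑ i, w i • p i := by
  rw [Finset.sum_coe_sort t fun i => w i • p i]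
  refine Finset.sum_subset t.subset_univ fun i _ hi => ?_
  rw [Function.support_subset_iff'.1 hw i (Finset.mem_coe.not.2 hi), zero_smul]

theorem sum_finset_of_support_subset {w : ι → ℝ} (hw : Function.support w ⊆ t) :
    ∑ i : t, w i = ∑ i, w i := by
  simpa only [smul_eq_mul, mul_one] using sum_finset_smul_of_support_subset hw fun _ => (1 : ℝ)

theorem exists_mem_stdSimplex_face_iff {C : (t → ℝ) → Prop} :
    (∃ w ∈ stdSimplex ℝ t, C w) ↔
      ∃ w ∈ stdSimplex ℝ ι, Function.support w ⊆ t ∧ C fun i => w i := by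
  constructor
  · rintro ⟨w, hw, hC⟩
    have restrict_eq : (fun i : t => Subtype.val.extend w 0 (i : ι)) = w :=
      funext fun i => Subtype.val_injective.extend_apply w 0 i
    have hsupp : Function.support (Subtype.val.extend w (0 : ι → ℝ)) ⊆ t := by
      rw [Function.support_extend_zero Subtype.val_injective]
      exact Subtype.coe_image_subset _ _
    refine ⟨Subtype.val.extend w 0, ⟨?_, ?_⟩, hsupp, by rwa [restrict_eq]⟩
    · exact Function.extend_nonneg (g := w) (e := (0 : ι → ℝ)) hw.1 le_rfl
    · rw [← sum_finset_of_support_subset hsupp, ← hw.2]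
      exact congrArg (fun u : t → ℝ => ∑ i, u i) restrict_eq
  · rintro ⟨w, hw, hsupp, hC⟩
    exact ⟨_, ⟨fun i => hw.1 i, (sum_finset_of_support_subset hsupp).trans hw.2⟩, hC⟩

variable {E : Type*} [NormedAddCommGroup E] [NormedSpace ℝ E]

theorem mem_convexHull_image_iff {p : ι → E} {x : E} :
    x ∈ convexHull ℝ (p '' t) ↔
      ∃ w ∈ stdSimplex ℝ ι, Function.support w ⊆ t ∧ Fintype.linearCombination ℝ p w = x := by
  have himage : p '' t = range fun i : t => p i := image_eq_range p t
  rw [himage, convexHull_range_eq_image_stdSimplex, mem_image, exists_mem_stdSimplex_face_iff]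
  refine exists_congr fun w => and_congr_right fun _ => and_congr_right fun hsupp => ?_
  simp only [Fintype.linearCombination_apply]
  rw [sum_finset_smul_of_support_subset hsupp]

theorem mem_intrinsicInterior_convexHull_image_iff {p : ι → E}
    (hp : AffineIndependent ℝ fun i : t => p i) {x : E} :
    x ∈ intrinsicInterior ℝ (convexHull ℝ (p '' t)) ↔
      ∃ w ∈ stdSimplex ℝ ι, Function.support w = t ∧ Fintype.linearCombination ℝ p w = x := by
  have himage : p '' t = range fun i : t => p i := image_eq_range p t
  rw [himage, mem_intrinsicInterior_convexHull_range hp, exists_mem_stdSimplex_face_iff]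
  refine exists_congr fun w => and_congr_right fun hw => ?_
  rw [← and_assoc, Subset.antisymm_iff]
  have hpos : (∀ i : t, 0 < w i) ↔ (t : Set ι) ⊆ Function.support w :=
    Subtype.forall.trans (forall₂_congr fun i _ => (hw.1 i).lt_iff_ne')
  rw [hpos]
  refine and_congr_right fun hsupp => ?_
  rw [Fintype.linearCombination_apply, sum_finset_smul_of_support_subset hsupp.1]

theorem eq_of_linearCombination_eq {p : ι → E} (hp : AffineIndependent ℝ fun i : t => p i)
    {w w' : ι → ℝ} (hw : w ∈ stdSimplex ℝ ι) (hw' : w' ∈ stdSimplex ℝ ι)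
    (hwt : Function.support w ⊆ t) (hwt' : Function.support w' ⊆ t)
    (h : Fintype.linearCombination ℝ p w = Fintype.linearCombination ℝ p w') : w = w' := by
  have hsum : ∑ i : t, w i = ∑ i : t, w' i := by
    rw [sum_finset_of_support_subset hwt, sum_finset_of_support_subset hwt', hw.2, hw'.2]
  have hcomb : ∑ i : t, w i • p i = ∑ i : t, w' i • p i := by
    rwa [sum_finset_smul_of_support_subset hwt, sum_finset_smul_of_support_subset hwt']
  ext i
  by_cases hi : i ∈ t
  · exact hp.eq_of_sum_eq_sum hsum hcomb ⟨i, hi⟩ (Finset.mem_univ _)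
  · rw [Function.support_subset_iff'.1 hwt i hi, Function.support_subset_iff'.1 hwt' i hi]

end Face

/-! ### Geometric realization -/

section Realization

variable {ι : Type*} {E : Type*} [NormedAddCommGroup E] [NormedSpace ℝ E]
  (K : SimplicialComplex ℝ E) (p : ι ↪ E)

theorem isRelLowerSet_preimage_map_faces :
    IsRelLowerSet (Finset.map p ⁻¹' K.faces) Finset.Nonempty := fun _ ht =>
  ⟨Finset.map_nonempty.1 (K.nonempty_of_mem_faces ht), fun _ hut hu =>
    K.down_closed ht (Finset.map_subset_map.2 hut) hu.map⟩

variable {K} in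
theorem affineIndependent_of_map_mem_faces {t : Finset ι} (ht : t.map p ∈ K.faces) :
    AffineIndependent ℝ fun i : t => p i :=
  (K.indep ht).comp_embedding
    ⟨fun i => ⟨p i, Finset.mem_map_of_mem p (Finset.coe_mem i)⟩, fun _ _ h =>
      Subtype.ext (p.injective (congrArg Subtype.val h))⟩

variable [Fintype ι]

theorem injOn_linearCombination_openRealization :
    InjOn (Fintype.linearCombination ℝ p) (openRealization (Finset.map p ⁻¹' K.faces)) := by
  classical
  rintro w ⟨hw, t, ht, hwt⟩ w' ⟨hw', t', ht', hwt'⟩ heq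
  have hmem : Fintype.linearCombination ℝ p w ∈ convexHull ℝ (p '' ↑(t ∩ t')) := by
    rw [Finset.coe_inter, image_inter p.injective, ← Finset.coe_map, ← Finset.coe_map]
    refine K.inter_subset_convexHull ht ht' ⟨?_, ?_⟩
    · rw [Finset.coe_map]
      exact mem_convexHull_image_iff.2 ⟨w, hw, hwt.subset, rfl⟩
    · rw [Finset.coe_map]
      exact mem_convexHull_image_iff.2 ⟨w', hw', hwt'.subset, heq.symm⟩
  obtain ⟨u, hu, hut, hueq⟩ := mem_convexHull_image_iff.1 hmem
  rw [Finset.coe_inter, subset_inter_iff] at hut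
  calc w = u := eq_of_linearCombination_eq (affineIndependent_of_map_mem_faces p ht) hw hu
        hwt.subset hut.1 hueq.symm
    _ = w' := eq_of_linearCombination_eq (affineIndependent_of_map_mem_faces p ht') hu hw'
        hut.2 hwt'.subset (hueq.trans heq)

variable {K} {P : Set (Finset E)}

theorem image_openRealization_eq_biUnion_intrinsicInterior (hPK : P ⊆ K.faces)
    (hPp : P ⊆ range (Finset.map p)) :
    Fintype.linearCombination ℝ p '' openRealization (Finset.map p ⁻¹' P) =
      ⋃ s ∈ P, intrinsicInterior ℝ (convexHull ℝ (s : Set E)) := by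
  ext x
  simp only [mem_iUnion, exists_prop]
  constructor
  · rintro ⟨w, ⟨hw, t, ht, hwt⟩, rfl⟩
    refine ⟨t.map p, ht, ?_⟩
    rw [Finset.coe_map]
    exact (mem_intrinsicInterior_convexHull_image_iff
      (affineIndependent_of_map_mem_faces p (hPK ht))).2 ⟨w, hw, hwt, rfl⟩
  · rintro ⟨s, hs, hx⟩
    obtain ⟨t, rfl⟩ := hPp hs
    rw [Finset.coe_map] at hx
    obtain ⟨w, hw, hwt, rfl⟩ := (mem_intrinsicInterior_convexHull_image_iff
      (affineIndependent_of_map_mem_faces p (hPK hs))).1 hx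
    exact ⟨w, ⟨hw, t, hs, hwt⟩, rfl⟩

theorem image_openRealization_eq_space (hp : K.faces ⊆ range (Finset.map p)) :
    Fintype.linearCombination ℝ p '' openRealization (Finset.map p ⁻¹' K.faces) = K.space := by
  ext x
  rw [SimplicialComplex.mem_space_iff]
  constructor
  · rintro ⟨w, ⟨hw, t, ht, hwt⟩, rfl⟩
    refine ⟨t.map p, ht, ?_⟩
    rw [Finset.coe_map]
    exact mem_convexHull_image_iff.2 ⟨w, hw, hwt.subset, rfl⟩
  · rintro ⟨s, hs, hx⟩
    obtain ⟨t, rfl⟩ := hp hs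
    rw [Finset.coe_map] at hx
    obtain ⟨w, hw, hwt, rfl⟩ := mem_convexHull_image_iff.1 hx
    exact ⟨w, mem_openRealization_of_support_subset (isRelLowerSet_preimage_map_faces K p) hs hw
      hwt, rfl⟩

theorem nonempty_homeomorph_image_openRealization (hPK : P ⊆ K.faces) :
    Nonempty (openRealization (Finset.map p ⁻¹' P) ≃ₜ
      (Fintype.linearCombination ℝ p '' openRealization (Finset.map p ⁻¹' P))) := by
  have : CompactSpace (openRealization (Finset.map p ⁻¹' K.faces)) :=
    isCompact_iff_compactSpace.1 (isCompact_openRealization (isRelLowerSet_preimage_map_faces K p))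
  have hcont : Continuous fun w : ι → ℝ => Fintype.linearCombination ℝ p w :=
    (Fintype.linearCombination ℝ p).continuous_of_finiteDimensional
  have hembed : Topology.IsEmbedding
      ((openRealization (Finset.map p ⁻¹' K.faces)).domRestrict (Fintype.linearCombination ℝ p)) :=
    (Continuous.isClosedEmbedding (hcont.comp continuous_subtype_val)
      (injOn_linearCombination_openRealization K p).injective).isEmbedding
  have hsub := openRealization_mono (preimage_mono (f := Finset.map p) hPK)
  have hrange : range ((openRealization (Finset.map p ⁻¹' K.faces)).domRestrict
      (Fintype.linearCombination ℝ p) ∘ inclusion hsub) =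
      Fintype.linearCombination ℝ p '' openRealization (Finset.map p ⁻¹' P) :=
    (image_eq_range _ _).symm
  exact ⟨(hembed.comp (.inclusion hsub)).toHomeomorph.trans (.setCongr hrange)⟩

end Realization

theorem exists_simplicialComplex_faces_eq_map_image {Q : Type*} [Fintype Q]
    (A : PreAbstractSimplicialComplex Q) :
    ∃ (p : Q ↪ EuclideanSpace ℝ (Fin (Fintype.card Q)))
      (L : SimplicialComplex ℝ (EuclideanSpace ℝ (Fin (Fintype.card Q)))),
      L.faces = Finset.map p '' A.faces := by
  classical
  let b := (EuclideanSpace.basisFun _ ℝ).toBasis.reindex (Fintype.equivFin Q).symm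
  have vertices_subset : ⋃ s ∈ (A.map b).faces, (s : Set _) ⊆ range b := by
    simp only [iUnion₂_subset_iff]
    rintro _ ⟨t, -, rfl⟩
    rw [Finset.coe_image]
    exact image_subset_range _ _
  let p : Q ↪ EuclideanSpace ℝ (Fin (Fintype.card Q)) := ⟨b, b.injective⟩
  refine ⟨p, .ofAffineIndependent (A.map b)
    (b.linearIndependent.affineIndependent.range.mono vertices_subset), ?_⟩
  exact image_congr fun t _ => (Finset.map_eq_image p t).symm

theorem nonempty_homeomorph_openRealization_space {Q E : Type*} [Fintype Q]
    [NormedAddCommGroup E] [NormedSpace ℝ E] {A : PreAbstractSimplicialComplex Q}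
    {L : SimplicialComplex ℝ E} {p : Q ↪ E} (hL : L.faces = Finset.map p '' A.faces) :
    Nonempty (openRealization A.faces ≃ₜ L.space) := by
  have hA : Finset.map p ⁻¹' L.faces = A.faces := by
    rw [hL, preimage_image_eq _ (Finset.map_injective p)]
  rw [← image_openRealization_eq_space p (hL ▸ image_subset_range _ _), ← hA]
  exact nonempty_homeomorph_image_openRealization p Subset.rfl

theorem subset_range_map_subtype {α : Type*} {P : Set (Finset α)} {V : Set α}
    (hV : ∀ s ∈ P, (s : Set α) ⊆ V) :
    P ⊆ range (Finset.map (Function.Embedding.subtype (· ∈ V))) := by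
  classical
  exact fun s hs => ⟨s.subtype (· ∈ V), Finset.subtype_map_of_mem (hV s hs)⟩

theorem nonempty_homotopyEquiv_biUnion_intrinsicInterior {E : Type*} [NormedAddCommGroup E]
    [NormedSpace ℝ E] {K : SimplicialComplex ℝ E} {P : Set (Finset E)} {ι : Type*} [Finite ι]
    {p : ι ↪ E} [Fintype (Finset.map p ⁻¹' P)] (hPK : P ⊆ K.faces)
    (hPp : P ⊆ range (Finset.map p)) :
    Nonempty (ContinuousMap.HomotopyEquiv
      (⋃ s ∈ P, intrinsicInterior ℝ (convexHull ℝ (s : Set E)) : Set E)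
      (openRealization (orderComplex (Finset.map p ⁻¹' P)).faces)) := by
  classical
  have := Fintype.ofFinite ι
  have hempty : ∅ ∉ Finset.map p ⁻¹' P := fun h => K.empty_notMem (hPK h)
  obtain ⟨e⟩ := nonempty_homeomorph_image_openRealization p hPK
  rw [← image_openRealization_eq_biUnion_intrinsicInterior p hPK hPp]
  exact ⟨e.symm.toHomotopyEquiv.trans (subdivisionHomotopyEquiv hempty)⟩

theorem open_complement_of_skeleton_homotopy_type_general {E : Type*} [NormedAddCommGroup E]
    [NormedSpace ℝ E] (K : SimplicialComplex ℝ E) {P : Set (Finset E)} (hPK : P ⊆ K.faces)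
    (hfin : P.Finite) {a b : ℕ} (hcard : ∀ s ∈ P, s.card ∈ Icc a b) :
    ∃ (N : ℕ) (L : SimplicialComplex ℝ (EuclideanSpace ℝ (Fin N))),
      L.faces.Finite ∧ (∀ t ∈ L.faces, t.card + a ≤ b + 1) ∧
      Nonempty (ContinuousMap.HomotopyEquiv
        (⋃ s ∈ P, intrinsicInterior ℝ (convexHull ℝ (s : Set E)) : Set E) L.space) := by
  let V : Set E := ⋃ s ∈ P, s
  have : Finite V := (hfin.biUnion fun s _ => s.finite_toSet).to_subtype
  let p : V ↪ E := Function.Embedding.subtype (· ∈ V)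
  let Q : Set (Finset V) := Finset.map p ⁻¹' P
  have := Fintype.ofFinite Q
  obtain ⟨q, L, hL⟩ := exists_simplicialComplex_faces_eq_map_image (orderComplex Q)
  refine ⟨_, L, hL ▸ (toFinite _).image _, ?_, ?_⟩
  · rw [hL]
    rintro _ ⟨c, hc, rfl⟩
    rw [Finset.card_map]
    refine card_add_le_of_mem_faces_orderComplex (fun σ hσ => ?_) hc
    exact σ.card_map p ▸ hcard _ hσ
  · have hPp : P ⊆ range (Finset.map p) := subset_range_map_subtype fun s => subset_biUnion_of_mem
    obtain ⟨e⟩ := nonempty_homotopyEquiv_biUnion_intrinsicInterior hPK hPp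
    obtain ⟨f⟩ := nonempty_homeomorph_openRealization_space hL
    exact ⟨e.trans f.toHomotopyEquiv⟩

/-- Let `K` be a finite simplicial complex of dimension `k` and `S` a set of simplices
of `K` containing every simplex of dimension `≤ r`.  Then the union `|K \ S|` of the open
simplices of the simplices of `K` not in `S` is homotopy equivalent to a finite
(simplicial, hence CW) complex of dimension `≤ k - r - 1`. -/
theorem open_complement_of_skeleton_homotopy_type
    {N k r : ℕ} (K : SimplicialComplex ℝ (EuclideanSpace ℝ (Fin N)))
    (hfin : K.faces.Finite)
    (hdim : ∀ s ∈ K.faces, s.card ≤ k + 1)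
    (S : Set (Finset (EuclideanSpace ℝ (Fin N))))
    (hS : ∀ s ∈ K.faces, s.card ≤ r + 1 → s ∈ S) :
    ∃ (N' : ℕ) (L : SimplicialComplex ℝ (EuclideanSpace ℝ (Fin N'))),
      L.faces.Finite ∧
      (∀ t ∈ L.faces, (t.card : ℤ) ≤ (k : ℤ) - (r : ℤ)) ∧
      Nonempty (ContinuousMap.HomotopyEquiv
        (⋃ s ∈ K.faces \ S,
          intrinsicInterior ℝ (convexHull ℝ (s : Set (EuclideanSpace ℝ (Fin N)))) :
          Set (EuclideanSpace ℝ (Fin N)))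
        L.space) := by
  obtain ⟨N', L, hLfin, hLcard, hLK⟩ := open_complement_of_skeleton_homotopy_type_general K
    (P := K.faces \ S) sdiff_subset (hfin.subset sdiff_subset) (a := r + 2) (b := k + 1)
    fun s hs => ⟨not_le.1 fun h => hs.2 (hS s hs.1 (by omega)), hdim s hs.1⟩
  exact ⟨N', L, hLfin, fun t ht => by have := hLcard t ht; omega, hLK⟩
end
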